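/- Fix an integer K ≥ 1 and 0 < η ≤ 1/2. Consider the additive Gaussian model Y = X + σZ with η = σ²/2 and cumulative distribution functions F, G of X, Y. Assume F and G are (2K+2)-times continuously differentiable with all derivatives up to order 2K+2 uniformly bounded by L on ℝ, and fix y ∈ ℝ with q(y) = G^{(1)}(y) > 0. Let h₁,…,h_K be determined by the recursion Σ_{l=0}^{k−1} (−1)^l (k!/((k−l)! l!)) Σ_{j=1}^{k−l} G^{(2l+j)} · B_{k−l,j}(h₁,…,h_{k−l−j+1}) + (−1)^k G^{(2k)} = 0 (k = 1,…,K), and define the K-th order denoiser T_K(y) = y + Σ_{k=1}^K (η^k/k!) h_k(y). Then there exists a constant C, depending only on L, K, and q(y), such that |F(T_K(y)) − G(y)| ≤ C · η^{K+1}. -/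

import Mathlib

open MeasureTheory ProbabilityTheory Filter

/-- The partial Bell polynomial `B_{n,j}(x₁, …, x_{n−j+1})`. -/
noncomputable def bellPartial (n j : ℕ) (x : ℕ → ℝ) : ℝ :=
  ∑ i ∈ Finset.filter
      (fun i : Fin (n - j + 1) → ℕ =>
        (∑ m, i m) = j ∧ (∑ m, (m.1 + 1) * i m) = n)
      (Fintype.piFinset fun _ => Finset.range (n + 1)),
    (n.factorial : ℝ) / (∏ m, ((i m).factorial : ℝ)) *
      ∏ m, (x (m.1 + 1) / ((m.1 + 1).factorial : ℝ)) ^ i m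

lemma taylor_abs (n : ℕ) : ∀ (f : ℝ → ℝ) (L : ℝ), ContDiff ℝ (n+1) f →
    (∀ x, |iteratedDeriv (n+1) f x| ≤ L) → ∀ x d : ℝ,
    |f (x + d) - ∑ j ∈ Finset.range (n+1), iteratedDeriv j f x * (d ^ j / (j.factorial : ℝ))|
      ≤ L * |d| ^ (n+1) := by
  intro f L hf hb x d
  by_cases hd : d = 0
  · subst hd
    rw [Finset.sum_eq_single 0]
    · simp
    · intro b _ hb; simp [hb]
    · simp
  have hx : x ≠ x + d := by simpa using hd
  obtain ⟨x', _, hx'⟩ := taylor_mean_remainder_lagrange_iteratedDeriv (n := n) hx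
    (hf.contDiffOn)
  have e : taylorWithinEval f n (Set.uIcc x (x+d)) x (x+d) =
    ∑ j ∈ Finset.range (n+1), iteratedDeriv j f x * (d ^ j / (j.factorial : ℝ)) := by
    rw [taylor_within_apply]
    refine Finset.sum_congr rfl fun j hj => ?_
    have hj' : j ≤ n := by simpa [Nat.lt_succ_iff] using hj
    rw [iteratedDerivWithin_eq_iteratedDeriv (uniqueDiffOn_uIcc hx) _ (by simp)]
    · simp; ring
    · refine (hf.of_le ?_).contDiffAt
      exact_mod_cast (by omega : j ≤ n + 1)
  rw [← e, hx']
  have hL : 0 ≤ L := le_trans (abs_nonneg _) (hb x)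
  have h1 : (1:ℝ) ≤ ((n+1).factorial : ℝ) := by exact_mod_cast Nat.succ_le_of_lt (Nat.factorial_pos _)
  rw [abs_div, abs_mul, abs_pow, Nat.abs_cast]
  simp only [add_sub_cancel_left]
  rw [div_le_iff₀ (by positivity)]
  calc _ ≤ L * |d| ^ (n+1) * 1 := by
        rw [mul_one]; exact mul_le_mul_of_nonneg_right (hb _) (by positivity)
    _ ≤ _ := by gcongr

lemma gauss_int_pow (n : ℕ) : Integrable (fun z : ℝ => z ^ n) (gaussianReal 0 1) := by
  have h := memLp_id_gaussianReal (μ := 0) (v := 1) (n : NNReal)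
  have := h.integrable_norm_pow' (p := n)
  rw [← integrable_norm_iff (by fun_prop)]
  simpa [norm_pow] using this

lemma gauss_int_abs_pow (n : ℕ) : Integrable (fun z : ℝ => |z| ^ n) (gaussianReal 0 1) := by
  simpa [abs_pow] using (gauss_int_pow n).abs

lemma iter_exp (n : ℕ) : iteratedDeriv (n+1) (fun t : ℝ => Real.exp (t^2/2)) =
    fun t => t * iteratedDeriv n (fun t : ℝ => Real.exp (t^2/2)) t
      + n * iteratedDeriv (n-1) (fun t : ℝ => Real.exp (t^2/2)) t := by
  have hc : ContDiff ℝ ⊤ (fun t : ℝ => Real.exp (t^2/2)) := by fun_prop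
  have hd : ∀ k, ∀ t, HasDerivAt (iteratedDeriv k (fun t : ℝ => Real.exp (t^2/2)))
      (iteratedDeriv (k+1) (fun t : ℝ => Real.exp (t^2/2)) t) t := by
    intro k t
    rw [iteratedDeriv_succ]
    refine DifferentiableAt.hasDerivAt ?_
    exact (hc.differentiable_iteratedDeriv k (by exact WithTop.coe_lt_top _)) t
  induction n with
  | zero =>
    funext t
    simp only [zero_add, iteratedDeriv_one, iteratedDeriv_zero]
    have := ((hasDerivAt_pow 2 t).div_const 2).exp
    rw [this.deriv]; simp; ring
  | succ n ih =>
    funext t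
    rw [iteratedDeriv_succ, ih]
    have h1 := ((hasDerivAt_id t).mul (hd n t)).add ((hd (n-1) t).const_mul (n:ℝ))
    have h2 : deriv (fun t => t * iteratedDeriv n (fun t : ℝ => Real.exp (t^2/2)) t
      + n * iteratedDeriv (n-1) (fun t : ℝ => Real.exp (t^2/2)) t) t = _ := h1.deriv
    rw [h2, ih]
    rcases n with _ | n
    · simp; ring
    · simp; ring

lemma gauss_mom (n : ℕ) : ∫ z, z ^ n ∂(gaussianReal 0 1) =
    iteratedDeriv n (fun t : ℝ => Real.exp (t^2/2)) 0 := by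
  have := iteratedDeriv_mgf_zero (X := id) (μ := gaussianReal 0 1) (by simp [integrableExpSet_id_gaussianReal]) n
  rw [mgf_id_gaussianReal] at this
  simpa using this.symm

lemma gauss_mom_even (k : ℕ) : ∫ z, z ^ (2*k) ∂(gaussianReal 0 1) =
    ((2*k).factorial : ℝ) / (2^k * k.factorial) := by
  induction k with
  | zero => simp
  | succ k ih =>
    rw [gauss_mom, show 2*(k+1) = 2*k+1+1 by ring, iter_exp]
    simp only [zero_mul, zero_add, Nat.add_sub_cancel]
    rw [← gauss_mom, ih]
    push_cast [Nat.factorial_succ]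
    field_simp
    ring

lemma gauss_mom_odd (k : ℕ) : ∫ z, z ^ (2*k+1) ∂(gaussianReal 0 1) = 0 := by
  induction k with
  | zero => simp [integral_id_gaussianReal]
  | succ k ih =>
    rw [gauss_mom, show 2*(k+1)+1 = 2*k+1+1+1 by ring, iter_exp]
    simp only [zero_mul, zero_add]
    rw [← gauss_mom, show 2*k+2-1 = 2*k+1 from rfl, ih, mul_zero]

lemma cdf_conv {Ω : Type} [MeasureSpace Ω] [IsProbabilityMeasure (ℙ : Measure Ω)]
    (X Z : Ω → ℝ) (hX : Measurable X) (hZ : Measurable Z)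
    (hg : Measure.map Z ℙ = gaussianReal 0 1) (hi : IndepFun X Z ℙ) (σ : ℝ)
    (Y : Ω → ℝ) (hY : ∀ ω, Y ω = X ω + σ * Z ω) (F G : ℝ → ℝ)
    (hF : ∀ x, F x = (Measure.map X ℙ (Set.Iic x)).toReal)
    (hG : ∀ x, G x = (Measure.map Y ℙ (Set.Iic x)).toReal) (x : ℝ) :
    G x = ∫ z, F (x - σ * z) ∂(gaussianReal 0 1) := by
  have hY' : Y = (fun p : ℝ × ℝ => p.1 + σ * p.2) ∘ (fun ω => (X ω, Z ω)) := by
    funext ω; simp [hY]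
  have hp := (indepFun_iff_map_prod_eq_prod_map_map hX.aemeasurable hZ.aemeasurable).1 hi
  have : IsProbabilityMeasure (Measure.map X ℙ) := Measure.isProbabilityMeasure_map hX.aemeasurable
  have hm : Measurable (fun p : ℝ × ℝ => p.1 + σ * p.2) := by fun_prop
  rw [hG, hY', ← Measure.map_map hm (hX.prodMk hZ), hp, hg, Measure.map_apply hm measurableSet_Iic,
    Measure.prod_apply_symm (hm measurableSet_Iic), ← integral_toReal]
  · congr 1; funext z
    rw [hF]
    congr 2
    ext u; simp [le_sub_iff_add_le]
  · exact (measurable_measure_prodMk_right (hm measurableSet_Iic)).aemeasurable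
  · exact ae_of_all _ fun z => measure_lt_top _ _

lemma iter_conv (N : ℕ) (L σ : ℝ) (F G : ℝ → ℝ) (hF : ContDiff ℝ N F)
    (hb : ∀ k ≤ N, ∀ x, |iteratedDeriv k F x| ≤ L)
    (hG : ∀ x, G x = ∫ z, F (x - σ * z) ∂(gaussianReal 0 1)) (k : ℕ) (hk : k ≤ N) :
    ∀ x, iteratedDeriv k G x = ∫ z, iteratedDeriv k F (x - σ * z) ∂(gaussianReal 0 1) := by
  induction k with
  | zero => simpa using hG
  | succ k ih =>
    intro x
    have hc : ∀ j ≤ N, Continuous (iteratedDeriv j F) := fun j hj =>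
      hF.continuous_iteratedDeriv j (by exact_mod_cast hj)
    rw [iteratedDeriv_succ, funext (ih (by omega))]
    refine (hasDerivAt_integral_of_dominated_loc_of_deriv_le (s := Set.univ) (bound := fun _ => L)
      (F' := fun x z => iteratedDeriv (k+1) F (x - σ * z)) Filter.univ_mem ?_ ?_ ?_ ?_ ?_ ?_).2.deriv
    · refine .of_forall fun x => ?_
      exact ((hc k (by omega)).comp (by fun_prop)).aestronglyMeasurable
    · refine Integrable.of_bound ((hc k (by omega)).comp (by fun_prop)).aestronglyMeasurable L ?_
      exact ae_of_all _ fun z => hb k (by omega) _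
    · exact ((hc (k+1) (by omega)).comp (by fun_prop)).aestronglyMeasurable
    · exact ae_of_all _ fun z x _ => hb (k+1) (by omega) _
    · exact integrable_const _
    · refine ae_of_all _ fun z x _ => ?_
      have h1 : HasDerivAt (iteratedDeriv k F) (iteratedDeriv (k+1) F (x - σ*z)) (x - σ*z) := by
        rw [iteratedDeriv_succ]
        exact (hF.differentiable_iteratedDeriv k (by exact_mod_cast hk) _).hasDerivAt
      exact h1.comp_sub_const x (σ*z)

/-- generating polynomial of the increments -/
noncomputable def genP (K : ℕ) (h : ℕ → ℝ) : Polynomial ℝ :=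
  ∑ m ∈ Finset.range K, Polynomial.C (h (m+1) / ((m+1).factorial : ℝ)) * Polynomial.X ^ (m+1)

/-- generating polynomial divided by X -/
noncomputable def genA (K : ℕ) (h : ℕ → ℝ) : Polynomial ℝ :=
  ∑ m ∈ Finset.range K, Polynomial.C (h (m+1) / ((m+1).factorial : ℝ)) * Polynomial.X ^ m

lemma genP_eq (K : ℕ) (h : ℕ → ℝ) : genP K h = Polynomial.X * genA K h := by
  unfold genP genA
  rw [Finset.mul_sum]
  refine Finset.sum_congr rfl fun m _ => by ring

lemma genP_pow_coeff_bell (n j : ℕ) (hjn : j ≤ n) (h : ℕ → ℝ) :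
    (genP (n-j+1) h ^ j).coeff n = (j.factorial : ℝ) / n.factorial * bellPartial n j h := by
  unfold genP bellPartial
  rw [Finset.sum_range (n := n-j+1), Finset.sum_pow_eq_sum_piAntidiag, Polynomial.finsetSum_coeff,
    Finset.mul_sum]
  have : Finset.filter (fun i : Fin (n - j + 1) → ℕ =>
        (∑ m, i m) = j ∧ (∑ m, (m.1 + 1) * i m) = n)
      (Fintype.piFinset fun _ => Finset.range (n + 1)) =
      Finset.filter (fun i => (∑ m : Fin (n-j+1), (m.1 + 1) * i m) = n) (Finset.piAntidiag Finset.univ j) := by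
    ext i
    simp only [Finset.mem_filter, Fintype.mem_piFinset, Finset.mem_range, Finset.mem_piAntidiag,
      Finset.mem_univ]
    constructor
    · rintro ⟨_, h1, h2⟩
      exact ⟨⟨h1, fun _ _ => trivial⟩, h2⟩
    · rintro ⟨⟨h1, _⟩, h2⟩
      refine ⟨fun a => ?_, h1, h2⟩
      have := Finset.single_le_sum (f := i) (fun _ _ => Nat.zero_le _) (Finset.mem_univ a)
      have h1' : ∑ m, i m = j := h1
      omega
  rw [this, Finset.sum_filter]
  refine Finset.sum_congr rfl fun i hi => ?_
  rw [Finset.mem_piAntidiag] at hi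
  have hs : ∑ m, i m = j := hi.1
  have e : (∏ m : Fin (n-j+1), (Polynomial.C (h (m.1+1) / ((m.1+1).factorial : ℝ)) * Polynomial.X ^ (m.1+1)) ^ i m)
     = Polynomial.C (∏ m : Fin (n-j+1), (h (m.1+1) / ((m.1+1).factorial : ℝ)) ^ i m) *
       Polynomial.X ^ (∑ m : Fin (n-j+1), (m.1+1) * i m) := by
    simp_rw [mul_pow, Finset.prod_mul_distrib, ← pow_mul, Finset.prod_pow_eq_pow_sum]
    simp [map_prod]
  rw [e, ← Polynomial.C_eq_natCast, Polynomial.coeff_C_mul, Polynomial.coeff_C_mul_X_pow]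
  have hmul : (Nat.multinomial Finset.univ i : ℝ) = (j.factorial : ℝ) / ∏ m, ((i m).factorial : ℝ) := by
    rw [eq_div_iff (by positivity)]
    have := Nat.multinomial_spec Finset.univ i
    rw [hs] at this
    rw [← this]; push_cast; ring
  by_cases hn : (∑ m : Fin (n-j+1), (m.1+1) * i m) = n
  · rw [if_pos hn.symm, if_pos hn, hmul]
    have : (n.factorial : ℝ) ≠ 0 := by positivity
    field_simp
  · rw [if_neg (Ne.symm hn), if_neg hn, mul_zero]

lemma genP_pow_coeff (K n j : ℕ) (hj : 1 ≤ j) (hjn : j ≤ n) (hn : n ≤ K) (h : ℕ → ℝ) :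
    (genP K h ^ j).coeff n = (j.factorial : ℝ) / n.factorial * bellPartial n j h := by
  rw [← genP_pow_coeff_bell n j hjn]
  rw [genP_eq, genP_eq, mul_pow, mul_pow]
  obtain ⟨d, rfl⟩ := Nat.exists_eq_add_of_le' hjn
  rw [Polynomial.coeff_X_pow_mul, Polynomial.coeff_X_pow_mul, Nat.add_sub_cancel]
  have h1 : Polynomial.X ^ (d+1) ∣ genA K h - genA (d+1) h := by
    unfold genA
    rw [← Finset.sum_range_add_sum_Ico _ (show d+1 ≤ K by omega), add_sub_cancel_left]
    refine Finset.dvd_sum fun m hm => ?_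
    rw [Finset.mem_Ico] at hm
    exact Dvd.dvd.mul_left (pow_dvd_pow _ hm.1) _
  have h2 := h1.trans (sub_dvd_pow_sub_pow (genA K h) (genA (d+1) h) j)
  rw [Polynomial.X_pow_dvd_iff] at h2
  have := h2 d (by omega)
  rw [Polynomial.coeff_sub] at this
  linarith

lemma genP_pow_coeff_lt (K n j : ℕ) (hjn : n < j) (h : ℕ → ℝ) :
    (genP K h ^ j).coeff n = 0 := by
  rw [genP_eq, mul_pow, Polynomial.coeff_X_pow_mul', if_neg (by omega)]

lemma bell_one (k : ℕ) (hk : 1 ≤ k) (h : ℕ → ℝ) : bellPartial k 1 h = h k := by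
  have h1 := genP_pow_coeff k k 1 le_rfl hk le_rfl h
  rw [pow_one] at h1
  have h2 : (genP k h).coeff k = h k / k.factorial := by
    unfold genP
    rw [Polynomial.finsetSum_coeff, Finset.sum_eq_single (k-1)]
    · simp only [Nat.sub_add_cancel hk, Polynomial.coeff_C_mul_X_pow, if_true]
    · intro b _ hb
      rw [Polynomial.coeff_C_mul_X_pow, if_neg (by omega)]
    · intro hh; simp at hh; omega
  rw [h2] at h1
  have : (k.factorial : ℝ) ≠ 0 := by positivity
  field_simp at h1
  simpa using h1.symm

lemma bell_bound (n j : ℕ) (M : ℝ) (h : ℕ → ℝ)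
    (hh : ∀ m, 1 ≤ m → m ≤ n - j + 1 → |h m| ≤ M) :
    |bellPartial n j h| ≤ bellPartial n j (fun _ => M) := by
  unfold bellPartial
  refine (Finset.abs_sum_le_sum_abs _ _).trans (Finset.sum_le_sum fun i _ => ?_)
  rw [abs_mul, abs_of_nonneg (a := (n.factorial : ℝ) / _) (by positivity), Finset.abs_prod]
  refine mul_le_mul_of_nonneg_left ?_ (by positivity)
  refine Finset.prod_le_prod (fun _ _ => abs_nonneg _) fun m _ => ?_
  rw [abs_pow, abs_div, Nat.abs_cast]
  have := hh (m.1+1) (by omega) (by omega)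
  gcongr

lemma bell_nonneg (n j : ℕ) (M : ℝ) (hM : 0 ≤ M) : 0 ≤ bellPartial n j (fun _ => M) := by
  unfold bellPartial; positivity

lemma h_bound (K : ℕ) (L qy : ℝ) (hL : 0 < L) (hqy : 0 < qy) (n : ℕ) : n ≤ K →
    ∃ M : ℝ, 0 ≤ M ∧ ∀ g h : ℕ → ℝ, (∀ i ≤ 2 * K + 2, |g i| ≤ L) → g 1 = qy →
      (∀ k, 1 ≤ k → k ≤ K →
            (∑ l ∈ Finset.range k, (-1 : ℝ) ^ l * (k.choose l : ℝ) *
                ∑ j ∈ Finset.Icc 1 (k - l),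
                  g (2 * l + j) * bellPartial (k - l) j (fun m => h m))
              + (-1 : ℝ) ^ k * g (2 * k) = 0) →
      ∀ m, 1 ≤ m → m ≤ n → |h m| ≤ M := by
  induction n with
  | zero => intro _; exact ⟨0, le_rfl, fun g h _ _ _ m h1 h2 => by omega⟩
  | succ n ih =>
    intro hn
    obtain ⟨M, hM, H⟩ := ih (by omega)
    set B : ℝ := (∑ l ∈ Finset.range n, ((n+1).choose (l+1) : ℝ) *
                ∑ j ∈ Finset.Icc 1 (n + 1 - (l+1)), L * bellPartial (n+1 - (l+1)) j (fun _ => M))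
         + ∑ j ∈ Finset.Icc 2 (n+1), L * bellPartial (n+1) j (fun _ => M) + L with hB
    have hB0 : 0 ≤ B := by
      rw [hB]
      have := fun a b => bell_nonneg a b M hM
      refine add_nonneg (add_nonneg (Finset.sum_nonneg fun l _ => mul_nonneg (by positivity) (Finset.sum_nonneg fun j _ => mul_nonneg hL.le (this _ _))) (Finset.sum_nonneg fun j _ => mul_nonneg hL.le (this _ _))) hL.le
    refine ⟨max M (B / qy), le_max_of_le_left hM, ?_⟩
    intro g h hg hg1 hrec m hm1 hm2
    have Hm := H g h hg hg1 hrec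
    rcases Nat.lt_or_ge n m with hlt | hge
    swap
    · exact (Hm m hm1 hge).trans (le_max_left _ _)
    obtain rfl : m = n+1 := by omega
    refine le_trans ?_ (le_max_right _ _)
    rw [le_div_iff₀ hqy]
    have R := hrec (n+1) (by omega) hn
    rw [Finset.sum_range_succ', ← Finset.sum_Ioc_add_eq_sum_Icc (by omega)] at R
    simp only [pow_zero, Nat.choose_zero_right, Nat.cast_one, mul_one, one_mul, Nat.sub_zero, mul_zero, zero_add] at R
    rw [bell_one _ (by omega), hg1] at R
    have e : Finset.Ioc 1 (n+1) = Finset.Icc 2 (n+1) := by ext; simp; omega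
    rw [e] at R
    have b1 : |∑ l ∈ Finset.range n, (-1 : ℝ) ^ (l+1) * ((n+1).choose (l+1) : ℝ) *
                ∑ j ∈ Finset.Icc 1 (n + 1 - (l+1)),
                  g (2 * (l+1) + j) * bellPartial (n+1 - (l+1)) j (fun m => h m)| ≤
        ∑ l ∈ Finset.range n, ((n+1).choose (l+1) : ℝ) *
                ∑ j ∈ Finset.Icc 1 (n + 1 - (l+1)), L * bellPartial (n+1 - (l+1)) j (fun _ => M) := by
      refine (Finset.abs_sum_le_sum_abs _ _).trans (Finset.sum_le_sum fun l hl => ?_)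
      rw [Finset.mem_range] at hl
      rw [abs_mul, abs_mul, abs_pow, abs_neg, abs_one, one_pow, one_mul, Nat.abs_cast]
      refine mul_le_mul_of_nonneg_left ?_ (by positivity)
      refine (Finset.abs_sum_le_sum_abs _ _).trans (Finset.sum_le_sum fun j hj => ?_)
      rw [Finset.mem_Icc] at hj
      rw [abs_mul]
      refine mul_le_mul (hg _ (by omega)) (bell_bound _ _ _ _ fun m h1 h2 => Hm m h1 (by omega)) (abs_nonneg _) hL.le
    have b2 : |∑ j ∈ Finset.Icc 2 (n+1), g j * bellPartial (n+1) j (fun m => h m)| ≤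
        ∑ j ∈ Finset.Icc 2 (n+1), L * bellPartial (n+1) j (fun _ => M) := by
      refine (Finset.abs_sum_le_sum_abs _ _).trans (Finset.sum_le_sum fun j hj => ?_)
      rw [Finset.mem_Icc] at hj
      rw [abs_mul]
      refine mul_le_mul (hg _ (by omega)) (bell_bound _ _ _ _ fun m h1 h2 => Hm m h1 (by omega)) (abs_nonneg _) hL.le
    have b3 : |(-1 : ℝ) ^ (n+1) * g (2 * (n+1))| ≤ L := by
      rw [abs_mul, abs_pow, abs_neg, abs_one, one_pow, one_mul]; exact hg _ (by omega)
    rw [← abs_of_pos hqy, ← abs_mul, hB]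
    rw [abs_le] at b1 b2 b3 ⊢
    constructor <;> nlinarith

/-- coefficientwise domination -/
def Dom (A B : Polynomial ℝ) : Prop := ∀ n, |A.coeff n| ≤ B.coeff n

lemma Dom.mul {A B A₂ B₂ : Polynomial ℝ} (h : Dom A B) (h₂ : Dom A₂ B₂) : Dom (A * A₂) (B * B₂) := by
  intro n
  rw [Polynomial.coeff_mul, Polynomial.coeff_mul]
  refine (Finset.abs_sum_le_sum_abs _ _).trans (Finset.sum_le_sum fun p _ => ?_)
  rw [abs_mul]
  exact mul_le_mul (h _) (h₂ _) (abs_nonneg _) ((abs_nonneg _).trans (h _))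

lemma Dom.pow {A B : Polynomial ℝ} (h : Dom A B) (j : ℕ) : Dom (A ^ j) (B ^ j) := by
  induction j with
  | zero =>
    intro n
    rw [pow_zero, pow_zero, Polynomial.coeff_one]
    split_ifs <;> simp
  | succ j ih => rw [pow_succ, pow_succ]; exact ih.mul h

lemma Dom.sum {ι : Type} (s : Finset ι) (A B : ι → Polynomial ℝ) (h : ∀ i ∈ s, Dom (A i) (B i)) :
    Dom (∑ i ∈ s, A i) (∑ i ∈ s, B i) := by
  intro n
  rw [Polynomial.finsetSum_coeff, Polynomial.finsetSum_coeff]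
  exact (Finset.abs_sum_le_sum_abs _ _).trans (Finset.sum_le_sum fun p hp => h p hp n)

lemma Dom.CX {a b : ℝ} (h : |a| ≤ b) (k : ℕ) :
    Dom (Polynomial.C a * Polynomial.X ^ k) (Polynomial.C b * Polynomial.X ^ k) := by
  intro n
  rw [Polynomial.coeff_C_mul_X_pow, Polynomial.coeff_C_mul_X_pow]
  split_ifs <;> simp [h]

lemma Dom.tail {A B : Polynomial ℝ} (h : Dom A B) (K : ℕ) (h0 : ∀ k, 1 ≤ k → k ≤ K → A.coeff k = 0)
    (t : ℝ) (ht : 0 ≤ t) (ht1 : t ≤ 1) : |A.eval t - A.coeff 0| ≤ B.eval 1 * t ^ (K+1) := by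
  set N := max A.natDegree B.natDegree
  have hA : A.natDegree < N + 1 := by omega
  have hB : B.natDegree < N + 1 := by omega
  rw [Polynomial.eval_eq_sum_range' hA, Polynomial.eval_eq_sum_range' hB, Finset.sum_range_succ',
    Finset.sum_range_succ']
  simp only [pow_zero, mul_one, add_sub_cancel_right, one_pow]
  have hb0 : 0 ≤ B.coeff 0 := (abs_nonneg _).trans (h 0)
  have : |∑ i ∈ Finset.range N, A.coeff (i+1) * t^(i+1)| ≤ (∑ i ∈ Finset.range N, B.coeff (i+1)) * t^(K+1) := by
    rw [Finset.sum_mul]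
    refine (Finset.abs_sum_le_sum_abs _ _).trans (Finset.sum_le_sum fun i _ => ?_)
    have hbi : 0 ≤ B.coeff (i+1) := (abs_nonneg _).trans (h _)
    by_cases hi : i + 1 ≤ K
    · rw [h0 _ (by omega) hi]; simp; positivity
    · rw [abs_mul, abs_of_nonneg (a := t^(i+1)) (by positivity)]
      exact mul_le_mul (h _) (pow_le_pow_of_le_one ht ht1 (by omega)) (by positivity) hbi
  refine this.trans ?_
  gcongr
  linarith

/-- the polynomial in η of the double Taylor expansion -/
noncomputable def genQ (K : ℕ) (g h : ℕ → ℝ) : Polynomial ℝ :=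
  ∑ l ∈ Finset.range (K+1), ∑ j ∈ Finset.range (K+1-l),
    Polynomial.C (g (2*l+j) * ((-1)^l / (l.factorial * j.factorial : ℝ))) * Polynomial.X ^ l * genP K h ^ j

lemma genQ_coeff (K : ℕ) (g h : ℕ → ℝ) (k : ℕ) (hk : k ≤ K) : (genQ K g h).coeff k =
    ∑ l ∈ Finset.range (k+1), ∑ j ∈ Finset.range (k+1-l),
     g (2*l+j) * ((-1)^l / (l.factorial * j.factorial : ℝ)) * (genP K h ^ j).coeff (k-l) := by
  unfold genQ
  simp only [Polynomial.finsetSum_coeff]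
  rw [eq_comm]
  refine (Finset.sum_subset (s₂ := Finset.range (K+1)) (by intro; simp; omega) ?_).trans ?_
  · intro l _ hl
    rw [Finset.mem_range] at hl
    rw [show k + 1 - l = 0 by omega]; simp
  refine Finset.sum_congr rfl fun l hl => ?_
  by_cases hlk : l ≤ k
  · refine (Finset.sum_subset (s₂ := Finset.range (K+1-l)) (by intro; simp; omega) ?_).trans ?_
    · intro j _ hj
      rw [Finset.mem_range] at hj
      rw [genP_pow_coeff_lt _ _ _ (by omega), mul_zero]
    · refine Finset.sum_congr rfl fun j _ => ?_
      rw [mul_assoc (Polynomial.C _), Polynomial.coeff_C_mul, Polynomial.coeff_X_pow_mul', if_pos hlk]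
  · rw [show k + 1 - l = 0 by omega]; simp only [Finset.range_zero, Finset.sum_empty]
    refine (Finset.sum_eq_zero fun j _ => ?_).symm
    rw [mul_assoc, Polynomial.coeff_C_mul, Polynomial.coeff_X_pow_mul', if_neg hlk, mul_zero]

lemma genQ_coeff_zero (K : ℕ) (g h : ℕ → ℝ) : (genQ K g h).coeff 0 = g 0 := by
  rw [genQ_coeff _ _ _ _ (Nat.zero_le _)]; simp

lemma genQ_coeff_pos (K : ℕ) (g h : ℕ → ℝ) (k : ℕ) (hk1 : 1 ≤ k) (hk : k ≤ K)
    (hrec : (∑ l ∈ Finset.range k, (-1 : ℝ) ^ l * (k.choose l : ℝ) *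
                ∑ j ∈ Finset.Icc 1 (k - l),
                  g (2 * l + j) * bellPartial (k - l) j (fun m => h m))
              + (-1 : ℝ) ^ k * g (2 * k) = 0) : (genQ K g h).coeff k = 0 := by
  rw [genQ_coeff _ _ _ _ hk]
  have hkf : (k.factorial : ℝ) ≠ 0 := by positivity
  rw [← mul_right_inj' hkf, mul_zero, ← hrec, Finset.sum_range_succ, mul_add]
  congr 1
  · rw [Finset.mul_sum]
    refine Finset.sum_congr rfl fun l hl => ?_
    rw [Finset.mem_range] at hl
    rw [show k + 1 - l = (k - l) + 1 by omega, Finset.sum_range_succ']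
    rw [pow_zero, Polynomial.coeff_one, if_neg (by omega), mul_zero, add_zero]
    have : Finset.Icc 1 (k-l) = Finset.Ico 1 (k-l+1) := by ext; simp only [Finset.mem_Icc, Finset.mem_Ico]; omega
    rw [this, Finset.sum_Ico_eq_sum_range, Finset.mul_sum, Finset.mul_sum]
    refine Finset.sum_congr (by simp) fun j hj => ?_
    rw [Finset.mem_range] at hj
    rw [genP_pow_coeff K (k-l) (j+1) (by omega) (by omega) (by omega), add_comm 1 j, Nat.cast_choose ℝ hl.le]
    have h1 : (l.factorial : ℝ) ≠ 0 := by positivity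
    have h2 : ((k-l).factorial : ℝ) ≠ 0 := by positivity
    have h3 : ((j+1).factorial : ℝ) ≠ 0 := by positivity
    field_simp
  · rw [show k + 1 - k = 1 by omega]
    simp
    field_simp

lemma genP_dom (K : ℕ) (h : ℕ → ℝ) (M : ℝ) (hh : ∀ m, 1 ≤ m → m ≤ K → |h m| ≤ M) :
    Dom (genP K h) (genP K (fun _ => M)) := by
  refine Dom.sum _ _ _ fun m hm => Dom.CX ?_ _
  rw [Finset.mem_range] at hm
  rw [abs_div, Nat.abs_cast]
  have := hh (m+1) (by omega) (by omega)
  gcongr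

/-- dominating polynomial -/
noncomputable def genR (K : ℕ) (L M : ℝ) : Polynomial ℝ :=
  ∑ l ∈ Finset.range (K+1), ∑ j ∈ Finset.range (K+1-l),
    Polynomial.C L * Polynomial.X ^ l * genP K (fun _ => M) ^ j

lemma genQ_dom (K : ℕ) (g h : ℕ → ℝ) (L M : ℝ) (hh : ∀ m, 1 ≤ m → m ≤ K → |h m| ≤ M)
    (hg : ∀ i ≤ 2 * K + 2, |g i| ≤ L) :
    Dom (genQ K g h) (genR K L M) := by
  refine Dom.sum _ _ _ fun l hl => Dom.sum _ _ _ fun j hj =>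
    Dom.mul (Dom.CX ?_ _) ((genP_dom K h M hh).pow j)
  rw [Finset.mem_range] at hl hj
  have h1 : (1:ℝ) ≤ (l.factorial : ℝ) := by exact_mod_cast Nat.succ_le_of_lt (Nat.factorial_pos _)
  have h2 : (1:ℝ) ≤ (j.factorial : ℝ) := by exact_mod_cast Nat.succ_le_of_lt (Nat.factorial_pos _)
  rw [abs_mul, abs_div, abs_pow, abs_neg, abs_one, one_pow, abs_of_pos (a := (l.factorial : ℝ) * _) (by positivity)]
  have h3 : 1 / ((l.factorial : ℝ) * j.factorial) ≤ 1 := by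
    rw [div_le_one (by positivity)]; nlinarith
  have h4 := hg (2*l+j) (by omega)
  calc _ ≤ |g (2*l+j)| * 1 := by gcongr
    _ ≤ L := by linarith

lemma iter_iter (a b : ℕ) (f : ℝ → ℝ) : iteratedDeriv a (iteratedDeriv b f) = iteratedDeriv (b + a) f := by
  rw [iteratedDeriv_eq_iterate, iteratedDeriv_eq_iterate, iteratedDeriv_eq_iterate, add_comm,
    Function.iterate_add_apply]

lemma contDiff_iter (N b : ℕ) (f : ℝ → ℝ) (hf : ContDiff ℝ N f) (n : ℕ) (hn : n + b ≤ N) :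
    ContDiff ℝ n (iteratedDeriv b f) := by
  rw [iteratedDeriv_eq_iterate]
  exact ContDiff.iterate_deriv' n b (hf.of_le (by exact_mod_cast hn))

lemma sum_even_odd (p : ℕ) (f : ℕ → ℝ) : ∑ j ∈ Finset.range (2*p), f j =
    ∑ m ∈ Finset.range p, f (2*m) + ∑ m ∈ Finset.range p, f (2*m+1) := by
  induction p with
  | zero => simp
  | succ p ih =>
    rw [show 2*(p+1) = 2*p+1+1 by ring, Finset.sum_range_succ, Finset.sum_range_succ, ih,
      Finset.sum_range_succ, Finset.sum_range_succ]
    ring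

lemma smooth_exp (p : ℕ) (hp : 1 ≤ p) (f : ℝ → ℝ) (L σ η : ℝ) (hη : η = σ^2/2)
    (hf : ContDiff ℝ (2*p : ℕ) f)
    (hb0 : ∀ x, |f x| ≤ L)
    (hb : ∀ x, |iteratedDeriv (2*p) f x| ≤ L) (x : ℝ) :
    |∫ z, f (x - σ * z) ∂(gaussianReal 0 1) -
      ∑ m ∈ Finset.range p, η ^ m / (m.factorial : ℝ) * iteratedDeriv (2*m) f x| ≤
     (L * 2 ^ p * ∫ z, |z| ^ (2*p) ∂(gaussianReal 0 1)) * η ^ p := by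
  obtain ⟨n, hn⟩ : ∃ n, 2 * p = n + 1 := ⟨2*p-1, by omega⟩
  have hT := taylor_abs n f L (by rw [hn] at hf; exact_mod_cast hf) (by rwa [← hn])
  have hterm : ∀ j, Integrable (fun z : ℝ => iteratedDeriv j f x * ((-(σ*z))^j / (j.factorial:ℝ))) (gaussianReal 0 1) := by
    intro j
    have := (gauss_int_pow j).const_mul (iteratedDeriv j f x * ((-σ)^j / (j.factorial:ℝ)))
    refine this.congr (ae_of_all _ fun z => ?_)
    simp only
    rw [← neg_mul, mul_pow]; ring
  have hsum : ∫ z, ∑ j ∈ Finset.range (2*p), iteratedDeriv j f x * ((-(σ*z))^j / (j.factorial:ℝ)) ∂(gaussianReal 0 1)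
      = ∑ m ∈ Finset.range p, η ^ m / (m.factorial : ℝ) * iteratedDeriv (2*m) f x := by
    rw [integral_finset_sum _ fun j _ => hterm j]
    have e : ∀ j, ∫ z, iteratedDeriv j f x * ((-(σ*z))^j / (j.factorial:ℝ)) ∂(gaussianReal 0 1) =
       iteratedDeriv j f x * ((-σ)^j / (j.factorial:ℝ)) * ∫ z, z ^ j ∂(gaussianReal 0 1) := by
      intro j
      rw [← integral_const_mul]
      congr 1; funext z
      rw [← neg_mul, mul_pow]; ring
    simp_rw [e]
    rw [sum_even_odd]
    simp_rw [gauss_mom_odd, gauss_mom_even, mul_zero]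
    rw [Finset.sum_const_zero, add_zero]
    refine Finset.sum_congr rfl fun m _ => ?_
    have h1 : (m.factorial : ℝ) ≠ 0 := by positivity
    have h2 : ((2*m).factorial : ℝ) ≠ 0 := by positivity
    rw [hη, pow_mul, neg_sq, div_pow]
    field_simp
  have hfi : Integrable (fun z => f (x - σ*z)) (gaussianReal 0 1) := by
    refine Integrable.of_bound ((hf.continuous).comp (by fun_prop)).aestronglyMeasurable L ?_
    exact ae_of_all _ fun z => hb0 _
  rw [← hsum, ← integral_sub hfi (integrable_finset_sum _ fun j _ => hterm j)]
  rw [← Real.norm_eq_abs]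
  refine (norm_integral_le_of_norm_le (g := fun z => L * (σ^2)^p * |z|^(2*p))
    ((gauss_int_abs_pow _).const_mul _) (ae_of_all _ fun z => ?_)).trans ?_
  · have := hT x (-(σ*z))
    rw [← hn, ← sub_eq_add_neg] at this
    rw [Real.norm_eq_abs]
    refine this.trans (le_of_eq ?_)
    rw [abs_neg, abs_mul, mul_pow, pow_mul |σ|, sq_abs]; ring
  · rw [integral_const_mul, hη, div_pow]
    refine le_of_eq ?_
    field_simp

lemma inv_identity (K : ℕ) (η : ℝ) (a : ℕ → ℝ) :
    ∑ l ∈ Finset.range (K+1), (-η)^l / (l.factorial : ℝ) *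
      ∑ m ∈ Finset.range (K+1-l), η^m / (m.factorial : ℝ) * a (l+m) = a 0 := by
  simp_rw [Finset.mul_sum]
  rw [← Finset.sum_range_diag_flip (K+1) (fun l m => (-η)^l / (l.factorial : ℝ) * (η^m / (m.factorial : ℝ) * a (l+m)))]
  rw [Finset.sum_eq_single 0]
  · simp
  · intro n _ hn
    have e : ∑ k ∈ Finset.range (n+1), (-η)^k / (k.factorial : ℝ) * (η^(n-k) / ((n-k).factorial : ℝ) * a (k+(n-k)))
      = a n / n.factorial * (-η + η)^n := by
      rw [add_pow, Finset.mul_sum]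
      refine Finset.sum_congr rfl fun k hk => ?_
      have hk' : k ≤ n := by simpa [Nat.lt_succ_iff] using hk
      rw [Nat.cast_choose ℝ hk', show k + (n-k) = n by omega]
      have h1 : (n.factorial : ℝ) ≠ 0 := by positivity
      field_simp
    rw [e]; simp [hn]
  · simp

lemma inv_exp (K : ℕ) (L σ η : ℝ) (hη0 : 0 < η) (hη : η = σ^2/2) (F G : ℝ → ℝ)
    (hF : ContDiff ℝ (2*K+2 : ℕ) F)
    (hb : ∀ k ≤ 2*K+2, ∀ x, |iteratedDeriv k F x| ≤ L)
    (hG : ∀ x, G x = ∫ z, F (x - σ * z) ∂(gaussianReal 0 1)) (x : ℝ) :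
    |F x - ∑ l ∈ Finset.range (K+1), (-η)^l / (l.factorial : ℝ) * iteratedDeriv (2*l) G x| ≤
    (∑ l ∈ Finset.range (K+1), L * 2 ^ (K+1-l) * ∫ z, |z| ^ (2*(K+1-l)) ∂(gaussianReal 0 1)) * η^(K+1) := by
  have h0 := inv_identity K η (fun i => iteratedDeriv (2*i) F x)
  simp only [mul_zero, iteratedDeriv_zero] at h0
  rw [← h0, ← Finset.sum_sub_distrib, Finset.sum_mul]
  refine (Finset.abs_sum_le_sum_abs _ _).trans (Finset.sum_le_sum fun l hl => ?_)
  rw [Finset.mem_range] at hl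
  rw [← mul_sub, abs_mul, abs_sub_comm]
  have hs := smooth_exp (K+1-l) (by omega) (iteratedDeriv (2*l) F) L σ η hη
    (contDiff_iter _ _ _ hF _ (by omega)) (hb _ (by omega))
    (by rw [iter_iter]; exact hb _ (by omega)) x
  rw [← iter_conv (2*K+2) L σ F G hF hb hG (2*l) (by omega) x] at hs
  simp_rw [iter_iter, ← mul_add] at hs
  have h1 : |(-η)^l / (l.factorial : ℝ)| ≤ η^l := by
    rw [abs_div, abs_pow, abs_neg, abs_of_pos hη0, Nat.abs_cast]
    exact div_le_self (by positivity) (by exact_mod_cast Nat.succ_le_of_lt (Nat.factorial_pos _))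
  refine (mul_le_mul h1 hs (abs_nonneg _) (by positivity)).trans (le_of_eq ?_)
  rw [show η^(K+1) = η^l * η^(K+1-l) by rw [← pow_add]; congr 1; omega]
  ring

lemma genP_eval (K : ℕ) (h : ℕ → ℝ) (η : ℝ) :
    (genP K h).eval η = ∑ k ∈ Finset.Icc 1 K, η ^ k / (k.factorial : ℝ) * h k := by
  have : Finset.Icc 1 K = Finset.Ico 1 (K+1) := by ext; simp only [Finset.mem_Icc, Finset.mem_Ico]; omega
  rw [this, Finset.sum_Ico_eq_sum_range, genP, Polynomial.eval_finsetSum]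
  refine Finset.sum_congr (by simp) fun m _ => ?_
  rw [add_comm 1 m]; simp; ring

/-- **Pointwise accuracy of the `K`-th order agnostic (G-expansion) denoiser.**
Fix `K ≥ 1`, `L > 0` and a value `qy > 0`.  There is a constant `C` depending only on
`K, L, qy` such that, in the additive Gaussian model `Y = X + σZ` with `0 < η = σ²/2 ≤ 1/2`
and cdfs `F, G` that are `(2K+2)`-times continuously differentiable with all derivatives up
to order `2K+2` bounded by `L`, for any point `y` with `q(y) = G^{(1)}(y) = qy > 0` and any
`h₁, …, h_K` solving the Bell-polynomial recursion at `y`, the `K`-th order denoiser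
`T_K(y) = y + Σ_{k=1}^K (η^k/k!) h_k(y)` satisfies `|F(T_K(y)) − G(y)| ≤ C η^{K+1}`. -/
theorem finite_order_G_denoiser_accuracy
    (K : ℕ) (hK : 1 ≤ K) (L qy : ℝ) (hL : 0 < L) (hqy : 0 < qy) :
    ∃ C : ℝ,
      ∀ (Ω : Type) [MeasureSpace Ω] [IsProbabilityMeasure (ℙ : Measure Ω)]
        (X Z : Ω → ℝ), Measurable X → Measurable Z →
        Measure.map Z ℙ = gaussianReal 0 1 → IndepFun X Z ℙ →
        ∀ σ η : ℝ, 0 < η → η ≤ 1 / 2 → η = σ ^ 2 / 2 →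
        ∀ Y : Ω → ℝ, (∀ ω, Y ω = X ω + σ * Z ω) →
        ∀ F G : ℝ → ℝ,
          (∀ x, F x = (Measure.map X ℙ (Set.Iic x)).toReal) →
          (∀ x, G x = (Measure.map Y ℙ (Set.Iic x)).toReal) →
          ContDiff ℝ (2 * K + 2) F → ContDiff ℝ (2 * K + 2) G →
          (∀ k ≤ 2 * K + 2, ∀ x : ℝ, |iteratedDeriv k F x| ≤ L ∧ |iteratedDeriv k G x| ≤ L) →
        ∀ y : ℝ, iteratedDeriv 1 G y = qy →
        ∀ h : ℕ → ℝ,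
          (∀ k, 1 ≤ k → k ≤ K →
            (∑ l ∈ Finset.range k, (-1 : ℝ) ^ l * (k.choose l : ℝ) *
                ∑ j ∈ Finset.Icc 1 (k - l),
                  iteratedDeriv (2 * l + j) G y * bellPartial (k - l) j (fun m => h m))
              + (-1 : ℝ) ^ k * iteratedDeriv (2 * k) G y = 0) →
          |F (y + ∑ k ∈ Finset.Icc 1 K, η ^ k / (k.factorial : ℝ) * h k) - G y|
            ≤ C * η ^ (K + 1) := by
  obtain ⟨M, hM, hMb⟩ := h_bound K L qy hL hqy K le_rfl
  refine ⟨(∑ l ∈ Finset.range (K+1), L * 2 ^ (K+1-l) * ∫ z, |z| ^ (2*(K+1-l)) ∂(gaussianReal 0 1))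
    + (∑ l ∈ Finset.range (K+1), L * (K * M) ^ (K+1-l)) + (genR K L M).eval 1, ?_⟩
  intro Ω _ _ X Z hX hZ hZg hind σ η hη0 hη1 hησ Y hY F G hF hG hFc hGc hbd y hy h hrec
  have hconv := cdf_conv X Z hX hZ hZg hind σ Y hY F G hF hG
  have hFc' : ContDiff ℝ (2*K+2 : ℕ) F := by exact_mod_cast hFc
  have hGc' : ContDiff ℝ (2*K+2 : ℕ) G := by exact_mod_cast hGc
  have hgb : ∀ i ≤ 2*K+2, |iteratedDeriv i G y| ≤ L := fun i hi => (hbd i hi y).2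
  have hhb := hMb (fun i => iteratedDeriv i G y) h hgb hy hrec
  set δ := ∑ k ∈ Finset.Icc 1 K, η ^ k / (k.factorial : ℝ) * h k with hδ
  have hη1' : η ≤ 1 := by linarith
  have hδb : |δ| ≤ K * M * η := by
    calc |δ| ≤ ∑ k ∈ Finset.Icc 1 K, |η ^ k / (k.factorial : ℝ) * h k| := Finset.abs_sum_le_sum_abs _ _
      _ ≤ ∑ k ∈ Finset.Icc 1 K, η * M := by
        refine Finset.sum_le_sum fun k hk => ?_
        rw [Finset.mem_Icc] at hk
        rw [abs_mul, abs_of_nonneg (a := η ^ k / (k.factorial : ℝ)) (by positivity)]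
        refine mul_le_mul ?_ (hhb k hk.1 hk.2) (abs_nonneg _) hη0.le
        refine (div_le_self (by positivity) (by exact_mod_cast Nat.succ_le_of_lt (Nat.factorial_pos _))).trans ?_
        simpa using pow_le_pow_of_le_one hη0.le hη1' hk.1
      _ = K * M * η := by simp; ring
  have s1 := inv_exp K L σ η hη0 hησ F G hFc' (fun k hk x => (hbd k hk x).1) hconv (y + δ)
  have s3 := (genQ_dom K (fun i => iteratedDeriv i G y) h L M hhb hgb).tail K
    (fun k h1 h2 => genQ_coeff_pos K _ h k h1 h2 (hrec k h1 h2)) η hη0.le hη1'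
  rw [genQ_coeff_zero, iteratedDeriv_zero] at s3
  have hQ : (genQ K (fun i => iteratedDeriv i G y) h).eval η =
      ∑ l ∈ Finset.range (K+1), (-η)^l / (l.factorial : ℝ) *
        ∑ j ∈ Finset.range (K+1-l), iteratedDeriv (2*l+j) G y * (δ ^ j / (j.factorial : ℝ)) := by
    unfold genQ
    simp_rw [Polynomial.eval_finsetSum, Finset.mul_sum]
    refine Finset.sum_congr rfl fun l _ => Finset.sum_congr rfl fun j _ => ?_
    simp only [Polynomial.eval_mul, Polynomial.eval_C, Polynomial.eval_pow, Polynomial.eval_X, genP_eval, ← hδ]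
    rw [neg_pow η l]
    field_simp
  have s2 : |∑ l ∈ Finset.range (K+1), (-η)^l / (l.factorial : ℝ) * iteratedDeriv (2*l) G (y+δ)
      - (genQ K (fun i => iteratedDeriv i G y) h).eval η| ≤
      (∑ l ∈ Finset.range (K+1), L * (K * M) ^ (K+1-l)) * η^(K+1) := by
    rw [hQ, ← Finset.sum_sub_distrib, Finset.sum_mul]
    refine (Finset.abs_sum_le_sum_abs _ _).trans (Finset.sum_le_sum fun l hl => ?_)
    rw [Finset.mem_range] at hl
    obtain ⟨n, hn⟩ : ∃ n, K + 1 - l = n + 1 := ⟨K - l, by omega⟩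
    have ht := taylor_abs n (iteratedDeriv (2*l) G) L
      (by exact_mod_cast contDiff_iter _ _ _ hGc' (n+1) (by omega))
      (by rw [iter_iter]; exact fun x => (hbd _ (by omega) x).2) y δ
    simp_rw [iter_iter] at ht
    rw [← mul_sub, abs_mul, hn]
    have h1 : |(-η)^l / (l.factorial : ℝ)| ≤ η^l := by
      rw [abs_div, abs_pow, abs_neg, abs_of_pos hη0, Nat.abs_cast]
      exact div_le_self (by positivity) (by exact_mod_cast Nat.succ_le_of_lt (Nat.factorial_pos _))
    have h2 : L * |δ| ^ (n+1) ≤ L * (K * M * η) ^ (n+1) := by gcongr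
    refine (mul_le_mul h1 (ht.trans h2) (abs_nonneg _) (by positivity)).trans (le_of_eq ?_)
    rw [show η^(K+1) = η^l * η^(n+1) by rw [← pow_add]; congr 1; omega, mul_pow]
    ring
  rw [add_mul, add_mul]
  rw [abs_le] at s1 s2 s3 ⊢
  constructor <;> linarith [s1.1, s1.2, s2.1, s2.2, s3.1, s3.2]
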